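/- Let K : ℝ → ℝ be differentiable with |K'(x)| ≤ B for all x, let ε > 0, and let K_ε(x) := ε⁻¹ K(x/ε). Let F : ℝ → ℝ be Lipschitz with constant L. Let μ and ν be probability measures on ℝ and let γ be a coupling of μ and ν (a probability measure on ℝ × ℝ with marginals μ and ν) such that (y, y') ↦ |y − y'| is γ-integrable. Then for every x ∈ ℝ: |F((K_ε ∗ μ)(x)) − F((K_ε ∗ ν)(x))| ≤ L·ε⁻²·B·∫_{ℝ×ℝ} |y − y'| dγ(y, y'). -/

import Mathlib

open MeasureTheory

/-- Lipschitz-in-measure estimate for the regularized volatility (Proposition 2.6): composing a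
Lipschitz function `F` with the mollified density, the difference at a point is bounded by
`L ε⁻² B` times the transport cost of any coupling `γ` of `μ` and `ν`. -/
theorem regularized_volatility_lipschitz_in_measure (K : ℝ → ℝ)
    (hdiff : Differentiable ℝ K) (B : ℝ) (hB : ∀ x : ℝ, |deriv K x| ≤ B)
    (ε : ℝ) (hε : 0 < ε) (F : ℝ → ℝ) (L : ℝ)
    (hF : ∀ v₁ v₂ : ℝ, |F v₁ - F v₂| ≤ L * |v₁ - v₂|)
    (μ ν : Measure ℝ) [IsProbabilityMeasure μ] [IsProbabilityMeasure ν]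
    (γ : Measure (ℝ × ℝ)) [IsProbabilityMeasure γ]
    (hγ1 : γ.map Prod.fst = μ) (hγ2 : γ.map Prod.snd = ν)
    (hint : Integrable (fun p : ℝ × ℝ => |p.1 - p.2|) γ) :
    ∀ x : ℝ,
      |F (∫ y, ε⁻¹ * K ((x - y) / ε) ∂μ) - F (∫ y, ε⁻¹ * K ((x - y) / ε) ∂ν)|
        ≤ L * ε⁻¹ ^ 2 * B * ∫ p : ℝ × ℝ, |p.1 - p.2| ∂γ := by
  intro x
  have hL : 0 ≤ L := by
    have h := hF 1 0
    have h' := abs_nonneg (F 1 - F 0)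
    norm_num at h
    linarith
  have hB0 : 0 ≤ B := (abs_nonneg _).trans (hB 0)
  have hei : 0 < ε⁻¹ := inv_pos.mpr hε
  have hK : ∀ a b : ℝ, |K a - K b| ≤ B * |a - b| := by
    intro a b
    have := Convex.norm_image_sub_le_of_norm_deriv_le (f := K) (s := Set.univ) (C := B)
      (x := b) (y := a) (fun z _ => hdiff z) (fun z _ => hB z) convex_univ trivial trivial
    simpa [Real.norm_eq_abs] using this
  have hKc : Continuous K := hdiff.continuous
  obtain ⟨f, hf⟩ : ∃ f : ℝ → ℝ, f = fun y => ε⁻¹ * K ((x - y) / ε) := ⟨_, rfl⟩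
  have hfc : Continuous f := by rw [hf]; fun_prop
  have hlip : ∀ a b : ℝ, |f a - f b| ≤ ε⁻¹ ^ 2 * B * |a - b| := by
    intro a b
    have h1 : f a - f b = ε⁻¹ * (K ((x - a) / ε) - K ((x - b) / ε)) := by rw [hf]; ring
    have h2 : (x - a) / ε - (x - b) / ε = ε⁻¹ * (b - a) := by rw [div_eq_mul_inv, div_eq_mul_inv]; ring
    have h3 := hK ((x - a) / ε) ((x - b) / ε)
    rw [h2, abs_mul, abs_of_pos hei, abs_sub_comm b a] at h3
    rw [h1, abs_mul, abs_of_pos hei]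
    calc _ ≤ ε⁻¹ * (B * (ε⁻¹ * |a - b|)) := by gcongr
      _ = _ := by ring
  rw [← hf]
  have hD : Integrable (fun p : ℝ × ℝ => f p.1 - f p.2) γ := by
    refine (hint.const_mul (ε⁻¹ ^ 2 * B)).mono' ?_ (Filter.Eventually.of_forall fun p => hlip _ _)
    exact (by fun_prop : Continuous (fun p : ℝ × ℝ => f p.1 - f p.2)).aestronglyMeasurable
  have hI0 : 0 ≤ ∫ p : ℝ × ℝ, |p.1 - p.2| ∂γ := integral_nonneg fun p => abs_nonneg _
  have e1 : ∫ y, f y ∂μ = ∫ p, f p.1 ∂γ := by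
    rw [← hγ1, integral_map measurable_fst.aemeasurable hfc.aestronglyMeasurable]
  have e2 : ∫ y, f y ∂ν = ∫ p, f p.2 ∂γ := by
    rw [← hγ2, integral_map measurable_snd.aemeasurable hfc.aestronglyMeasurable]
  rw [e1, e2]
  by_cases h1 : Integrable (fun p : ℝ × ℝ => f p.1) γ
  · have h2 : Integrable (fun p : ℝ × ℝ => f p.2) γ := by
      have := h1.sub hD
      refine this.congr (Filter.Eventually.of_forall fun p => ?_)
      simp
    have h3 : |∫ p, f p.1 ∂γ - ∫ p, f p.2 ∂γ| ≤ ε⁻¹ ^ 2 * B * ∫ p : ℝ × ℝ, |p.1 - p.2| ∂γ := by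
      rw [← integral_sub h1 h2, ← integral_const_mul]
      exact abs_integral_le_integral_abs.trans
        (integral_mono hD.abs (hint.const_mul _) fun p => hlip _ _)
    calc _ ≤ _ := hF _ _
      _ ≤ L * (ε⁻¹ ^ 2 * B * ∫ p : ℝ × ℝ, |p.1 - p.2| ∂γ) := by gcongr
      _ = _ := by ring
  · have h2 : ¬ Integrable (fun p : ℝ × ℝ => f p.2) γ := by
      intro h2
      refine h1 ((h2.add hD).congr (Filter.Eventually.of_forall fun p => ?_))
      simp
    rw [integral_undef h1, integral_undef h2, sub_self, abs_zero]
    positivity
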